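/- arXiv:2604.02462 — 2 statements merged into one kernel-verified Lean document; each statement's English description precedes it below -/
import Mathlib

section
/- Let Ω be a bounded domain in ℂⁿ and let a, b ∈ Ω. Then for every ε > 0 there exist a positive integer N and complex constants c_α, indexed by multi-indices α ∈ ℕⁿ with |α| ≤ N, such that for every holomorphic function h on Ω with ∫_Ω |h|² dV < ∞, |h(b) − Σ_{|α| ≤ N} c_α (∂^α h)(a)| ≤ ε · (∫_Ω |h|² dV)^{1/2}. -/
open MeasureTheory Finset

/-- Complex partial derivative of `h : ℂⁿ → ℂ` in the `i`-th coordinate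
direction. -/
noncomputable def pderivC {n : ℕ} (i : Fin n) (h : (Fin n → ℂ) → ℂ) :
    (Fin n → ℂ) → ℂ :=
  fun z => fderiv ℂ h z (Pi.single i 1)

/-- Multi-index complex partial derivative `∂^α h = ∂^{|α|}h/∂z₁^{α₁}⋯∂zₙ^{αₙ}`. -/
noncomputable def mpderiv {n : ℕ} (α : Fin n → ℕ) :
    ((Fin n → ℂ) → ℂ) → ((Fin n → ℂ) → ℂ) :=
  ((List.finRange n).map fun i => (pderivC i)^[α i]).foldr (· ∘ ·) id

/-!
Suppose that, in the sup norm over the unit ball of the Bergman space, the family `i ↦ h i b` is not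
in the closed span of the families `i ↦ ∂^α (h i) a`. By Hahn–Banach a bounded functional `ψ` kills
all the latter but not the former. The unit ball is locally bounded on `Ω` by the mean value
property, so `u z = ψ (i ↦ h i z)` is holomorphic on `Ω` and `∂^α u z = ψ (i ↦ ∂^α (h i) z)`. All
derivatives of `u` vanish at `a`, hence `u = 0` on `Ω` by the identity theorem, contradicting
`u b ≠ 0`. A uniform approximation on the unit ball scales to the whole space.
-/

open Metric Set Filter Topology

section CauchyEstimates

variable {E F : Type*} [NormedAddCommGroup E] [NormedAddCommGroup F] {f : E → F} {z w : E}
  {r M : ℝ}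

lemma mapsTo_closedBall_of_forall_norm_le (hr : 0 < r) (hM : ∀ w ∈ ball z r, ‖f w‖ ≤ M) :
    MapsTo f (ball z r) (closedBall (f z) (2 * M)) := fun w hw => by
  rw [mem_closedBall, dist_eq_norm]
  linarith [norm_sub_le (f w) (f z), hM w hw, hM z (mem_ball_self hr)]

variable [NormedSpace ℂ E] [NormedSpace ℂ F]

lemma norm_fderiv_le_of_forall_norm_le (hr : 0 < r) (hf : DifferentiableOn ℂ f (ball z r))
    (hM : ∀ w ∈ ball z r, ‖f w‖ ≤ M) : ‖fderiv ℂ f z‖ ≤ 2 * M / r :=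
  Complex.norm_fderiv_le_div_of_mapsTo_ball hf (mapsTo_closedBall_of_forall_norm_le hr hM) hr

lemma norm_sub_le_of_forall_norm_le (hf : DifferentiableOn ℂ f (ball z r))
    (hM : ∀ w ∈ ball z r, ‖f w‖ ≤ M) (hw : w ∈ ball z r) :
    ‖f w - f z‖ ≤ 2 * M / r * ‖w - z‖ := by
  simpa only [dist_eq_norm] using Complex.dist_le_div_mul_dist_of_mapsTo_ball hf
    (mapsTo_closedBall_of_forall_norm_le (pos_of_mem_ball hw) hM) hw

lemma norm_slope_le_of_forall_norm_le {v : E} {t : ℂ} (hf : DifferentiableOn ℂ f (ball z r))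
    (hM : ∀ w ∈ ball z r, ‖f w‖ ≤ M) (ht : t ≠ 0) (htv : ‖t • v‖ < r) :
    ‖t⁻¹ • (f (z + t • v) - f z)‖ ≤ 2 * M / r * ‖v‖ := by
  have hzt : z + t • v ∈ ball z r := by simpa using htv
  calc ‖t⁻¹ • (f (z + t • v) - f z)‖ = ‖t‖⁻¹ * ‖f (z + t • v) - f z‖ := by
        rw [norm_smul, norm_inv]
    _ ≤ ‖t‖⁻¹ * (2 * M / r * (‖t‖ * ‖v‖)) := by
        gcongr
        simpa [norm_smul] using norm_sub_le_of_forall_norm_le hf hM hzt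
    _ = 2 * M / r * ‖v‖ := by
        have : ‖t‖ ≠ 0 := norm_ne_zero_iff.2 ht
        field_simp

lemma norm_sub_sub_fderiv_le_of_forall_norm_le (hf : DifferentiableOn ℂ f (ball z r))
    (hM : ∀ w ∈ ball z r, ‖f w‖ ≤ M) (hw : w ∈ ball z r) :
    ‖f w - f z - fderiv ℂ f z (w - z)‖ ≤ 4 * M / r ^ 2 * ‖w - z‖ ^ 2 := by
  have hr : 0 < r := pos_of_mem_ball hw
  have hfz : HasFDerivAt f (fderiv ℂ f z) z :=
    (hf.differentiableAt (ball_mem_nhds z hr)).hasFDerivAt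
  let g : E → F := fun y => f y - fderiv ℂ f z (y - z)
  have hg_sub (y : E) : g y - g z = f y - f z - fderiv ℂ f z (y - z) := by
    simp only [g, sub_self, map_zero, sub_zero]; abel
  have hg : DifferentiableOn ℂ g (ball z r) := by
    refine hf.sub (Differentiable.differentiableOn ?_); fun_prop
  have hg_maps : MapsTo g (ball z r) (closedBall (g z) (4 * M)) := fun y hy => by
    rw [mem_closedBall, dist_eq_norm, hg_sub]
    have hlin : ‖fderiv ℂ f z (y - z)‖ ≤ 2 * M := calc
      _ ≤ ‖fderiv ℂ f z‖ * ‖y - z‖ := ContinuousLinearMap.le_opNorm _ _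
      _ ≤ 2 * M / r * r := by
        gcongr
        · exact (norm_nonneg _).trans (norm_fderiv_le_of_forall_norm_le hr hf hM)
        · exact norm_fderiv_le_of_forall_norm_le hr hf hM
        · exact (mem_ball_iff_norm.1 hy).le
      _ = 2 * M := by field_simp
    have hconst := mapsTo_closedBall_of_forall_norm_le hr hM hy
    rw [mem_closedBall, dist_eq_norm] at hconst
    linarith [norm_sub_le (f y - f z) (fderiv ℂ f z (y - z))]
  have hg_littleO : (g · - g z) =o[𝓝 z] fun y => ‖y - z‖ ^ 1 := by
    simpa only [hg_sub, pow_one] using hfz.isLittleO.norm_right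
  have := Complex.dist_le_mul_div_pow_of_mapsTo_ball_of_isLittleO hg hg_maps hg_littleO hw
  rw [dist_eq_norm, dist_eq_norm, hg_sub] at this
  exact this.trans_eq (by ring)

lemma hasFDerivAt_of_norm_sub_sub_le_sq {A : E →L[ℂ] F} {C : ℝ}
    (h : ∀ᶠ w in 𝓝 z, ‖f w - f z - A (w - z)‖ ≤ C * ‖w - z‖ ^ 2) : HasFDerivAt f A z := by
  rw [hasFDerivAt_iff_isLittleO]
  refine (Asymptotics.IsBigO.of_bound C ?_).trans_isLittleO
    (Asymptotics.isLittleO_pow_sub_sub z one_lt_two)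
  simpa using h

end CauchyEstimates

section Derivative

variable {E F : Type*} [NormedAddCommGroup E] [NormedSpace ℂ E] [FiniteDimensional ℂ E]
  [NormedAddCommGroup F] [NormedSpace ℂ F] [FiniteDimensional ℂ F] {z : E} {r M : ℝ}

-- By compactness the derivatives at `z` converge along an ultrafilter, and the quadratic bound on
-- the Taylor remainder passes to the limit.
lemma differentiableAt_of_tendsto_of_forall_norm_le {κ : Type*} {l : Filter κ} [l.NeBot]
    {f : κ → E → F} {g : E → F} (hr : 0 < r)
    (hf : ∀ᶠ k in l, DifferentiableOn ℂ (f k) (ball z r) ∧ ∀ w ∈ ball z r, ‖f k w‖ ≤ M)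
    (hlim : ∀ w ∈ ball z r, Tendsto (f · w) l (𝓝 (g w))) : DifferentiableAt ℂ g z := by
  let U := Ultrafilter.of l
  have hU : (U : Filter κ) ≤ l := Ultrafilter.of_le l
  have : ProperSpace (E →L[ℂ] F) := FiniteDimensional.proper ℂ _
  obtain ⟨A, -, hA⟩ : ∃ A ∈ closedBall (0 : E →L[ℂ] F) (2 * M / r),
      Tendsto (fun k => fderiv ℂ (f k) z) U (𝓝 A) := by
    refine (isCompact_closedBall _ _).ultrafilter_le_nhds' (U.map fun k => fderiv ℂ (f k) z) ?_
    refine hU (hf.mono fun k hk => ?_)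
    simpa using norm_fderiv_le_of_forall_norm_le hr hk.1 hk.2
  have hgA : HasFDerivAt g A z := by
    refine hasFDerivAt_of_norm_sub_sub_le_sq (C := 4 * M / r ^ 2) ?_
    filter_upwards [ball_mem_nhds z hr] with w hw
    have hlim_rem : Tendsto (fun k => f k w - f k z - fderiv ℂ (f k) z (w - z)) U
        (𝓝 (g w - g z - A (w - z))) :=
      (((hlim w hw).mono_left hU).sub ((hlim z (mem_ball_self hr)).mono_left hU)).sub
        (((ContinuousLinearMap.apply ℂ F (w - z)).continuous.tendsto A).comp hA)
    exact le_of_tendsto hlim_rem.norm <| hU <| hf.mono fun k hk =>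
      norm_sub_sub_fderiv_le_of_forall_norm_le hk.1 hk.2 hw
  exact hgA.differentiableAt

-- The slopes `t⁻¹ (f (· + t v) - f)` are holomorphic, and bounded near `z` by Cauchy's estimate.
lemma differentiableOn_fderiv_apply {Ω : Set E} (hΩ : IsOpen Ω) {f : E → F}
    (hf : DifferentiableOn ℂ f Ω) (v : E) : DifferentiableOn ℂ (fderiv ℂ f · v) Ω := by
  intro z hz
  obtain ⟨r, hr, hrΩ, hbdd⟩ : ∃ r > 0, ball z (r + r) ⊆ Ω ∧
      ∀ y ∈ ball z (r + r), ‖f y‖ ≤ ‖f z‖ + 1 := by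
    have hcont : ∀ᶠ y in 𝓝 z, ‖f y‖ < ‖f z‖ + 1 :=
      (hf.continuousOn.continuousAt (hΩ.mem_nhds hz)).norm.eventually_lt_const (lt_add_one _)
    obtain ⟨R, hR, hRball⟩ := Metric.eventually_nhds_iff_ball.1 ((hΩ.eventually_mem hz).and hcont)
    refine ⟨R / 2, half_pos hR, fun y hy => (hRball y ?_).1, fun y hy => (hRball y ?_).2.le⟩ <;>
      simpa using hy
  have hball {w : E} (hw : w ∈ ball z r) : ball w r ⊆ ball z (r + r) :=
    ball_subset_ball' (by linarith [mem_ball.1 hw])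
  have hsmall : ∀ᶠ t : ℂ in 𝓝[≠] 0, ‖t • v‖ < r :=
    ((Continuous.tendsto' (by fun_prop) 0 0 (by simp)).eventually_lt_const hr).filter_mono
      nhdsWithin_le_nhds
  refine (differentiableAt_of_tendsto_of_forall_norm_le (l := 𝓝[≠] (0 : ℂ)) hr
    (f := fun t w => t⁻¹ • (f (w + t • v) - f w)) (M := 2 * (‖f z‖ + 1) / r * ‖v‖) ?_
    fun w hw => ?_).differentiableWithinAt
  · filter_upwards [hsmall, self_mem_nhdsWithin] with t htv ht
    refine ⟨fun w hw => DifferentiableAt.differentiableWithinAt ?_, fun w hw => ?_⟩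
    · have hdiff {y : E} (hy : y ∈ ball w r) : DifferentiableAt ℂ f y :=
        hf.differentiableAt (hΩ.mem_nhds (hrΩ (hball hw hy)))
      refine DifferentiableAt.const_smul (DifferentiableAt.sub ?_ (hdiff (mem_ball_self hr))) _
      exact (hdiff (y := w + t • v) (by simpa using htv)).comp w (differentiableAt_id.add_const _)
    · exact norm_slope_le_of_forall_norm_le (hf.mono ((hball hw).trans hrΩ))
        (fun y hy => hbdd y (hball hw hy)) ht htv
  · have hfw : HasFDerivAt f (fderiv ℂ f w) w :=
      (hf.differentiableAt (hΩ.mem_nhds (hrΩ (hball hw (mem_ball_self hr))))).hasFDerivAt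
    exact (hfw.hasLineDerivAt v).tendsto_slope_zero

end Derivative

section LocallyBoundedFamilies

variable {ι : Type*} {E : Type*} [NormedAddCommGroup E] [NormedSpace ℂ E]

/-- A family of holomorphic functions on `Ω` that is bounded near every point of `Ω`, uniformly
over the family: a normal family, by Montel's theorem. -/
structure IsLocallyBoundedHolomorphicOn (F : ι → E → ℂ) (Ω : Set E) : Prop where
  differentiableOn : ∀ i, DifferentiableOn ℂ (F i) Ω
  locallyBounded : ∀ z ∈ Ω, ∃ M, ∀ᶠ w in 𝓝 z, ∀ i, ‖F i w‖ ≤ M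

/-- A linear functional on families of complex numbers which is continuous for the sup norm on
the bounded ones. It is defined on all families, with no constraint on the unbounded ones, so
that it applies to `i ↦ F i z` without a proof of boundedness. -/
def IsSupBounded (ψ : (ι → ℂ) →ₗ[ℂ] ℂ) : Prop :=
  ∃ K, ∀ C, 0 ≤ C → ∀ x : ι → ℂ, (∀ i, ‖x i‖ ≤ C) → ‖ψ x‖ ≤ K * C

namespace IsLocallyBoundedHolomorphicOn

variable {F : ι → E → ℂ} {Ω : Set E} {z : E}

lemma exists_ball (hF : IsLocallyBoundedHolomorphicOn F Ω) (hΩ : IsOpen Ω) (hz : z ∈ Ω) :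
    ∃ r > 0, ∃ M ≥ 0, ball z r ⊆ Ω ∧ ∀ w ∈ ball z r, ∀ i, ‖F i w‖ ≤ M := by
  obtain ⟨M, hM⟩ := hF.locallyBounded z hz
  obtain ⟨r, hr, hball⟩ := Metric.eventually_nhds_iff_ball.1 ((hΩ.eventually_mem hz).and hM)
  exact ⟨r, hr, max M 0, le_max_right _ _, fun w hw => (hball w hw).1,
    fun w hw i => ((hball w hw).2 i).trans (le_max_left _ _)⟩

variable [FiniteDimensional ℂ E]

lemma fderiv_apply (hF : IsLocallyBoundedHolomorphicOn F Ω) (hΩ : IsOpen Ω) (v : E) :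
    IsLocallyBoundedHolomorphicOn (fun i z => fderiv ℂ (F i) z v) Ω where
  differentiableOn i := differentiableOn_fderiv_apply hΩ (hF.differentiableOn i) v
  locallyBounded z hz := by
    obtain ⟨r, hr, M, -, hrΩ, hM⟩ := hF.exists_ball hΩ hz
    refine ⟨2 * M / (r / 2) * ‖v‖, ?_⟩
    filter_upwards [ball_mem_nhds z (half_pos hr)] with w hw i
    have hwr : ball w (r / 2) ⊆ ball z r := ball_subset_ball' (by linarith [mem_ball.1 hw])
    exact (fderiv ℂ (F i) w).le_of_opNorm_le (norm_fderiv_le_of_forall_norm_le (half_pos hr)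
      ((hF.differentiableOn i).mono (hwr.trans hrΩ)) fun y hy => hM y (hwr hy) i) v

lemma hasFDerivAt_apply (hF : IsLocallyBoundedHolomorphicOn F Ω) (hΩ : IsOpen Ω) (hz : z ∈ Ω)
    {ψ : (ι → ℂ) →ₗ[ℂ] ℂ} (hψ : IsSupBounded ψ) :
    HasFDerivAt (fun w => ψ fun i => F i w) (LinearMap.toContinuousLinearMap
      (ψ ∘ₗ LinearMap.pi fun i => (fderiv ℂ (F i) z : E →ₗ[ℂ] ℂ))) z := by
  obtain ⟨K, hK⟩ := hψ
  obtain ⟨r, hr, M, hM₀, hrΩ, hM⟩ := hF.exists_ball hΩ hz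
  refine hasFDerivAt_of_norm_sub_sub_le_sq (C := K * (4 * M / r ^ 2)) ?_
  filter_upwards [ball_mem_nhds z hr] with w hw
  simpa [← map_sub, Pi.sub_def, LinearMap.pi_apply, mul_assoc] using
    hK (4 * M / r ^ 2 * ‖w - z‖ ^ 2) (by positivity)
      (fun i => F i w - F i z - fderiv ℂ (F i) z (w - z)) fun i =>
        norm_sub_sub_fderiv_le_of_forall_norm_le ((hF.differentiableOn i).mono hrΩ)
          (fun y hy => hM y hy i) hw

lemma differentiableOn_apply (hF : IsLocallyBoundedHolomorphicOn F Ω) (hΩ : IsOpen Ω)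
    {ψ : (ι → ℂ) →ₗ[ℂ] ℂ} (hψ : IsSupBounded ψ) :
    DifferentiableOn ℂ (fun w => ψ fun i => F i w) Ω :=
  fun _ hz => (hF.hasFDerivAt_apply hΩ hz hψ).differentiableAt.differentiableWithinAt

end IsLocallyBoundedHolomorphicOn

end LocallyBoundedFamilies

section HahnBanach

lemma exists_clm_apply_ne_zero_of_notMem_closed {Y : Type*} [NormedAddCommGroup Y]
    [NormedSpace ℂ Y] {S : Submodule ℂ Y} (hS : IsClosed (S : Set Y)) {y : Y} (hy : y ∉ S) :
    ∃ φ : Y →L[ℂ] ℂ, (∀ s ∈ S, φ s = 0) ∧ φ y ≠ 0 := by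
  have : IsClosed (S : Set Y) := hS
  obtain ⟨φ, hφ⟩ := SeparatingDual.exists_ne_zero (R := ℂ) (x := S.mkQ y) (by simpa using hy)
  refine ⟨φ.comp S.mkQL, fun s hs => ?_, hφ⟩
  have : S.mkQ s = 0 := by simpa using hs
  exact (congrArg φ this).trans (map_zero φ)

variable {ι : Type*}

lemma exists_isSupBounded_eq_lp (φ : lp (fun _ : ι => ℂ) ⊤ →L[ℂ] ℂ) :
    ∃ ψ : (ι → ℂ) →ₗ[ℂ] ℂ, IsSupBounded ψ ∧ ∀ y : lp (fun _ : ι => ℂ) ⊤, ψ y = φ y := by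
  let incl : lp (fun _ : ι => ℂ) ⊤ →ₗ[ℂ] ι → ℂ :=
    { toFun := fun y => y, map_add' := fun _ _ => rfl, map_smul' := fun _ _ => rfl }
  obtain ⟨retr, hretr⟩ := incl.exists_leftInverse_of_injective
    (LinearMap.ker_eq_bot.2 Subtype.coe_injective)
  have hψ (y : lp (fun _ : ι => ℂ) ⊤) : (φ.toLinearMap ∘ₗ retr) y = φ y :=
    congrArg φ (LinearMap.congr_fun hretr y)
  refine ⟨φ.toLinearMap ∘ₗ retr, ⟨‖φ‖, fun C hC x hx => ?_⟩, hψ⟩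
  let y : lp (fun _ : ι => ℂ) ⊤ := ⟨x, memℓp_infty ⟨C, by rintro _ ⟨i, rfl⟩; exact hx i⟩⟩
  calc ‖(φ.toLinearMap ∘ₗ retr) x‖ = ‖φ y‖ := congrArg norm (hψ y)
    _ ≤ ‖φ‖ * C := φ.le_opNorm_of_le (lp.norm_le_of_forall_le hC hx)

lemma exists_finsupp_forall_norm_sub_sum_le {κ : Type*} {g : κ → ι → ℂ} {x : ι → ℂ}
    (hg : ∀ k, ∃ C, ∀ i, ‖g k i‖ ≤ C) (hx : ∃ C, ∀ i, ‖x i‖ ≤ C)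
    (h : ∀ ψ : (ι → ℂ) →ₗ[ℂ] ℂ, IsSupBounded ψ → (∀ k, ψ (g k) = 0) → ψ x = 0)
    {ε : ℝ} (hε : 0 < ε) :
    ∃ c : κ →₀ ℂ, ∀ i, ‖x i - c.sum fun k d => d * g k i‖ ≤ ε := by
  have hmem {y : ι → ℂ} (hy : ∃ C, ∀ i, ‖y i‖ ≤ C) : Memℓp y ⊤ :=
    memℓp_infty (hy.imp fun C hC => by rintro _ ⟨i, rfl⟩; exact hC i)
  let G : κ → lp (fun _ : ι => ℂ) ⊤ := fun k => ⟨g k, hmem (hg k)⟩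
  let X : lp (fun _ : ι => ℂ) ⊤ := ⟨x, hmem hx⟩
  have hX : X ∈ (Submodule.span ℂ (range G)).topologicalClosure := by
    by_contra hX
    obtain ⟨φ, hφ, hφX⟩ := exists_clm_apply_ne_zero_of_notMem_closed
      (Submodule.isClosed_topologicalClosure _) hX
    obtain ⟨ψ, hψ, hψφ⟩ := exists_isSupBounded_eq_lp φ
    refine hφX ((hψφ X).symm.trans (h ψ hψ fun k => (hψφ (G k)).trans (hφ _ ?_)))
    exact Submodule.le_topologicalClosure _ (Submodule.subset_span (mem_range_self k))
  obtain ⟨_, hspan, hdist⟩ := Metric.mem_closure_iff.1 hX ε hε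
  obtain ⟨c, rfl⟩ := Finsupp.mem_span_range_iff_exists_finsupp.1 hspan
  refine ⟨c, fun i => ?_⟩
  have hi : (c.sum fun k d => d • G k : lp (fun _ : ι => ℂ) ⊤) i =
      c.sum fun k d => d * g k i := by
    simp only [Finsupp.sum, lp.coeFn_sum, Finset.sum_apply]; rfl
  rw [← hi]
  rw [dist_eq_norm] at hdist
  exact (lp.norm_apply_le_norm ENNReal.top_ne_zero (X - _) i).trans hdist.le

end HahnBanach

section MultiIndexDerivatives

variable {n : ℕ}

/-- The derivative `∂^α` in the coordinates listed in `l` only, the head of `l` being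
differentiated last. The derivative `mpderiv α` is the case `l = List.finRange n`. -/
noncomputable def mpderivAlong (l : List (Fin n)) (α : Fin n → ℕ) :
    ((Fin n → ℂ) → ℂ) → ((Fin n → ℂ) → ℂ) :=
  (l.map fun i => (pderivC i)^[α i]).foldr (· ∘ ·) id

lemma mpderivAlong_congr {l : List (Fin n)} {α β : Fin n → ℕ} (h : ∀ i ∈ l, α i = β i) :
    mpderivAlong l α = mpderivAlong l β := by
  rw [mpderivAlong, mpderivAlong, List.map_congr_left fun i hi => by rw [h i hi]]

lemma mpderivAlong_cons_update {l : List (Fin n)} {i : Fin n} (hi : i ∉ l) (α : Fin n → ℕ)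
    (k : ℕ) : mpderivAlong (i :: l) (Function.update α i k) =
      (pderivC i)^[k] ∘ mpderivAlong l α := by
  rw [← mpderivAlong_congr (l := l) (α := Function.update α i k) (β := α) fun j hj =>
    Function.update_of_ne (ne_of_mem_of_not_mem hj hi) _ _]
  simp [mpderivAlong]

lemma iterate_pderivC_induction {P : (((Fin n → ℂ) → ℂ) → ((Fin n → ℂ) → ℂ)) → Prop} {i : Fin n}
    {T : ((Fin n → ℂ) → ℂ) → ((Fin n → ℂ) → ℂ)} (hT : P T)
    (hstep : ∀ T, P T → P (pderivC i ∘ T)) (k : ℕ) : P ((pderivC i)^[k] ∘ T) := by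
  induction k with
  | zero => exact hT
  | succ k ih => rw [Function.iterate_succ']; exact hstep _ ih

lemma mpderivAlong_induction {P : (((Fin n → ℂ) → ℂ) → ((Fin n → ℂ) → ℂ)) → Prop} (hid : P id)
    (hstep : ∀ i T, P T → P (pderivC i ∘ T)) (l : List (Fin n)) (α : Fin n → ℕ) :
    P (mpderivAlong l α) := by
  induction l with
  | nil => exact hid
  | cons i l ih => exact iterate_pderivC_induction ih (hstep i) (α i)

lemma mpderiv_induction {P : (((Fin n → ℂ) → ℂ) → ((Fin n → ℂ) → ℂ)) → Prop} (hid : P id)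
    (hstep : ∀ i T, P T → P (pderivC i ∘ T)) (α : Fin n → ℕ) : P (mpderiv α) :=
  mpderivAlong_induction hid hstep _ α

variable {Ω : Set (Fin n → ℂ)} {f g : (Fin n → ℂ) → ℂ}

lemma pderivC_const_smul (i : Fin n) (c : ℂ) (f : (Fin n → ℂ) → ℂ) :
    pderivC i (c • f) = c • pderivC i f := by
  ext z; simp [pderivC, fderiv_const_smul_field]

lemma mpderiv_const_smul (α : Fin n → ℕ) (c : ℂ) (f : (Fin n → ℂ) → ℂ) :
    mpderiv α (c • f) = c • mpderiv α f :=
  mpderiv_induction (P := fun T => T (c • f) = c • T f) rfl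
    (fun i T hT => by rw [Function.comp_apply, hT, pderivC_const_smul, Function.comp_apply]) α

lemma eqOn_pderivC (hΩ : IsOpen Ω) (h : EqOn f g Ω) (i : Fin n) :
    EqOn (pderivC i f) (pderivC i g) Ω := fun z hz => by
  rw [pderivC, pderivC, (h.eventuallyEq_of_mem (hΩ.mem_nhds hz)).fderiv_eq]

lemma eqOn_mpderiv (hΩ : IsOpen Ω) (h : EqOn f g Ω) (α : Fin n → ℕ) :
    EqOn (mpderiv α f) (mpderiv α g) Ω :=
  mpderiv_induction (P := fun T => EqOn (T f) (T g) Ω) h (fun i _ hT => eqOn_pderivC hΩ hT i) α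

lemma differentiableOn_pderivC (hΩ : IsOpen Ω) (hf : DifferentiableOn ℂ f Ω) (i : Fin n) :
    DifferentiableOn ℂ (pderivC i f) Ω :=
  differentiableOn_fderiv_apply hΩ hf _

lemma differentiableOn_iterate_pderivC (hΩ : IsOpen Ω) (hf : DifferentiableOn ℂ f Ω) (i : Fin n)
    (k : ℕ) : DifferentiableOn ℂ ((pderivC i)^[k] f) Ω :=
  iterate_pderivC_induction (P := fun T => DifferentiableOn ℂ (T f) Ω) (T := id) hf
    (fun _ hT => differentiableOn_pderivC hΩ hT i) k

lemma differentiableOn_mpderivAlong (hΩ : IsOpen Ω) (hf : DifferentiableOn ℂ f Ω)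
    (l : List (Fin n)) (α : Fin n → ℕ) : DifferentiableOn ℂ (mpderivAlong l α f) Ω :=
  mpderivAlong_induction (P := fun T => DifferentiableOn ℂ (T f) Ω) hf
    (fun i _ hT => differentiableOn_pderivC hΩ hT i) l α

end MultiIndexDerivatives

namespace IsLocallyBoundedHolomorphicOn

variable {n : ℕ} {ι : Type*} {F : ι → (Fin n → ℂ) → ℂ} {Ω : Set (Fin n → ℂ)}
  {ψ : (ι → ℂ) →ₗ[ℂ] ℂ}

protected lemma pderivC (hF : IsLocallyBoundedHolomorphicOn F Ω) (hΩ : IsOpen Ω) (j : Fin n) :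
    IsLocallyBoundedHolomorphicOn (fun i => pderivC j (F i)) Ω :=
  hF.fderiv_apply hΩ _

protected lemma mpderiv (hF : IsLocallyBoundedHolomorphicOn F Ω) (hΩ : IsOpen Ω)
    (α : Fin n → ℕ) : IsLocallyBoundedHolomorphicOn (fun i => mpderiv α (F i)) Ω :=
  mpderiv_induction (P := fun T => IsLocallyBoundedHolomorphicOn (fun i => T (F i)) Ω) hF
    (fun j _ hT => hT.pderivC hΩ j) α

lemma eqOn_pderivC_apply (hF : IsLocallyBoundedHolomorphicOn F Ω) (hΩ : IsOpen Ω)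
    (hψ : IsSupBounded ψ) (j : Fin n) :
    EqOn (pderivC j fun w => ψ fun i => F i w) (fun w => ψ fun i => pderivC j (F i) w) Ω :=
  fun _ hz => congrArg (· (Pi.single j 1)) (hF.hasFDerivAt_apply hΩ hz hψ).fderiv

lemma eqOn_mpderiv_apply (hF : IsLocallyBoundedHolomorphicOn F Ω) (hΩ : IsOpen Ω)
    (hψ : IsSupBounded ψ) (α : Fin n → ℕ) :
    EqOn (mpderiv α fun w => ψ fun i => F i w) (fun w => ψ fun i => mpderiv α (F i) w) Ω :=
  (mpderiv_induction (P := fun T => IsLocallyBoundedHolomorphicOn (fun i => T (F i)) Ω ∧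
      EqOn (T fun w => ψ fun i => F i w) (fun w => ψ fun i => T (F i) w) Ω) ⟨hF, fun _ _ => rfl⟩
    (fun j _ hT => ⟨hT.1.pderivC hΩ j,
      (eqOn_pderivC hΩ hT.2 j).trans (hT.1.eqOn_pderivC_apply hΩ hψ j)⟩) α).2

end IsLocallyBoundedHolomorphicOn

section IdentityTheorem

variable {n : ℕ} {Ω : Set (Fin n → ℂ)} {f : (Fin n → ℂ) → ℂ} {a p : Fin n → ℂ} {r : ℝ} {i : Fin n}

lemma update_mem_ball (hp : p ∈ ball a r) {t : ℂ} (ht : t ∈ ball (a i) r) :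
    Function.update p i t ∈ ball a r := by
  have hr : 0 < r := pos_of_mem_ball hp
  rw [mem_ball, dist_pi_lt_iff hr] at hp ⊢
  intro j
  obtain rfl | hj := eq_or_ne j i
  · simpa using ht
  · simpa [hj] using hp j

lemma iteratedDeriv_update (hΩ : IsOpen Ω) (hf : DifferentiableOn ℂ f Ω) (p : Fin n → ℂ)
    (i : Fin n) (k : ℕ) {t : ℂ} (ht : Function.update p i t ∈ Ω) :
    iteratedDeriv k (fun s => f (Function.update p i s)) t =
      (pderivC i)^[k] f (Function.update p i t) := by
  induction k generalizing t with
  | zero => simp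
  | succ k ih =>
    have hnear : iteratedDeriv k (fun s => f (Function.update p i s)) =ᶠ[𝓝 t]
        fun s => (pderivC i)^[k] f (Function.update p i s) :=
      ((hasDerivAt_update p i t).continuousAt.eventually_mem (hΩ.mem_nhds ht)).mono fun _ => ih
    have hderiv := ((differentiableOn_iterate_pderivC hΩ hf i k).differentiableAt
      (hΩ.mem_nhds ht)).hasFDerivAt.comp_hasDerivAt t (hasDerivAt_update p i t)
    rw [iteratedDeriv_succ, hnear.deriv_eq, Function.iterate_succ_apply']
    exact hderiv.deriv

lemma apply_update_eq_zero_of_iterate_pderivC (hf : DifferentiableOn ℂ f (ball a r))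
    (hp : p ∈ ball a r) (hpa : p i = a i) (hzero : ∀ k, (pderivC i)^[k] f p = 0) {t : ℂ}
    (ht : t ∈ ball (a i) r) : f (Function.update p i t) = 0 := by
  have hslice : DifferentiableOn ℂ (fun s => f (Function.update p i s)) (ball (a i) r) :=
    hf.comp (fun s _ => (hasDerivAt_update p i s).differentiableAt.differentiableWithinAt)
      fun s hs => update_mem_ball hp hs
  have hself : Function.update p i (a i) = p := by rw [← hpa, Function.update_eq_self]
  have hcoeff (k : ℕ) : iteratedDeriv k (fun s => f (Function.update p i s)) (a i) = 0 := by
    rw [iteratedDeriv_update isOpen_ball hf p i k (by rwa [hself]), hself, hzero]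
  rw [← Complex.taylorSeries_eq_on_ball hslice ht]
  simp [hcoeff]

-- Only the slice in the direction differentiated last is expanded at each step, so no commutation
-- of mixed derivatives is needed.
lemma apply_eq_zero_of_mpderivAlong (hf : DifferentiableOn ℂ f (ball a r)) {l : List (Fin n)}
    (hl : l.Nodup) (hp : p ∈ ball a r) (hpa : ∀ i ∈ l, p i = a i)
    (hzero : ∀ α, mpderivAlong l α f p = 0) {z : Fin n → ℂ} (hz : z ∈ ball a r)
    (hzp : ∀ i ∉ l, z i = p i) : f z = 0 := by
  induction l generalizing p with
  | nil =>
    obtain rfl : z = p := funext fun i => hzp i List.not_mem_nil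
    exact hzero 0
  | cons i l ih =>
    obtain ⟨hil, hl⟩ := List.nodup_cons.1 hl
    have hzi : z i ∈ ball (a i) r :=
      (dist_pi_lt_iff (pos_of_mem_ball hz)).1 hz i
    refine ih hl (update_mem_ball hp hzi) (fun j hj => ?_) (fun α => ?_) fun j hj => ?_
    · rw [Function.update_of_ne (ne_of_mem_of_not_mem hj hil), hpa j (List.mem_cons_of_mem i hj)]
    · refine apply_update_eq_zero_of_iterate_pderivC
        (differentiableOn_mpderivAlong isOpen_ball hf l α) hp (hpa i List.mem_cons_self)
        (fun k => ?_) hzi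
      rw [← hzero (Function.update α i k), mpderivAlong_cons_update hil, Function.comp_apply]
    · obtain rfl | hji := eq_or_ne j i
      · simp
      · rw [Function.update_of_ne hji, hzp j (by simp [hji, hj])]

lemma eqOn_zero_ball_of_mpderiv (hf : DifferentiableOn ℂ f (ball a r))
    (hzero : ∀ α, mpderiv α f a = 0) : EqOn f 0 (ball a r) := fun _ hz =>
  apply_eq_zero_of_mpderivAlong hf (List.nodup_finRange n) (mem_ball_self (pos_of_mem_ball hz))
    (fun _ _ => rfl) hzero hz fun i hi => absurd (List.mem_finRange i) hi

lemma mpderiv_zero (α : Fin n → ℕ) : mpderiv α (0 : (Fin n → ℂ) → ℂ) = 0 := by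
  simpa using mpderiv_const_smul α 0 0

theorem eqOn_zero_of_mpderiv_eq_zero (hΩ : IsOpen Ω) (hconn : IsPreconnected Ω)
    (hf : DifferentiableOn ℂ f Ω) (ha : a ∈ Ω) (hzero : ∀ α, mpderiv α f a = 0) :
    EqOn f 0 Ω := by
  let S : Set (Fin n → ℂ) := {z ∈ Ω | ∀ α, mpderiv α f z = 0}
  have hS_open : IsOpen S := Metric.isOpen_iff.2 fun z ⟨hz, hzS⟩ => by
    obtain ⟨r, hr, hrΩ⟩ := Metric.isOpen_iff.1 hΩ z hz
    refine ⟨r, hr, fun w hw => ⟨hrΩ hw, fun α => ?_⟩⟩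
    rw [eqOn_mpderiv isOpen_ball (eqOn_zero_ball_of_mpderiv (hf.mono hrΩ) hzS) α hw,
      mpderiv_zero, Pi.zero_apply]
  have hS_closed : closure S ∩ Ω ⊆ S := fun z ⟨hzS, hz⟩ => ⟨hz, fun α => by
    have hcont : ContinuousAt (mpderiv α f) z :=
      (differentiableOn_mpderivAlong hΩ hf _ α).continuousOn.continuousAt (hΩ.mem_nhds hz)
    have hmaps : MapsTo (mpderiv α f) S {0} := fun w hw => hw.2 α
    simpa using hcont.continuousWithinAt.mem_closure hzS hmaps⟩
  have hΩS : Ω ⊆ S := hconn.subset_of_closure_inter_subset hS_open ⟨a, ha, ha, hzero⟩ hS_closed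
  intro z hz
  obtain ⟨r, hr, hrΩ⟩ := Metric.isOpen_iff.1 hΩ z hz
  exact eqOn_zero_ball_of_mpderiv (hf.mono hrΩ) (hΩS hz).2 (mem_ball_self hr)

end IdentityTheorem

theorem IsLocallyBoundedHolomorphicOn.exists_finsupp_forall_norm_sub_mpderiv_sum_le {n : ℕ}
    {ι : Type*} {F : ι → (Fin n → ℂ) → ℂ} {Ω : Set (Fin n → ℂ)} {a b : Fin n → ℂ}
    (hF : IsLocallyBoundedHolomorphicOn F Ω) (hΩ : IsOpen Ω) (hconn : IsPreconnected Ω)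
    (ha : a ∈ Ω) (hb : b ∈ Ω) {ε : ℝ} (hε : 0 < ε) :
    ∃ c : (Fin n → ℕ) →₀ ℂ, ∀ i, ‖F i b - c.sum fun α d => d * mpderiv α (F i) a‖ ≤ ε := by
  have hbdd {G : ι → (Fin n → ℂ) → ℂ} (hG : IsLocallyBoundedHolomorphicOn G Ω) {z : Fin n → ℂ}
      (hz : z ∈ Ω) : ∃ C, ∀ i, ‖G i z‖ ≤ C :=
    (hG.locallyBounded z hz).imp fun _ hC => hC.self_of_nhds
  refine exists_finsupp_forall_norm_sub_sum_le (fun α => hbdd (hF.mpderiv hΩ α) ha) (hbdd hF hb)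
    (fun ψ hψ hker => ?_) hε
  exact eqOn_zero_of_mpderiv_eq_zero hΩ hconn (hF.differentiableOn_apply hΩ hψ) ha
    (fun α => (hF.eqOn_mpderiv_apply hΩ hψ α ha).trans (hker α)) hb

section MeanValue

variable {E F : Type*} [NormedAddCommGroup E] [NormedSpace ℂ E] [NormedAddCommGroup F]
  {B : Set E} {f : E → F}

lemma circleAverage_comp_smul_eq [NormedSpace ℂ F] [CompleteSpace F]
    (hB : Balanced ℂ B) (hf : DifferentiableOn ℂ f B) {w : E} (hw : w ∈ B) :
    Real.circleAverage (fun t : ℂ => f (t • w)) 0 1 = f 0 := by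
  have hdiff : DifferentiableOn ℂ (fun t : ℂ => f (t • w)) (closedBall 0 1) :=
    hf.comp (Differentiable.differentiableOn (by fun_prop))
      fun t ht => hB.smul_mem (mem_closedBall_zero_iff.1 ht) hw
  have hcl : DiffContOnCl ℂ (fun t : ℂ => f (t • w)) (ball 0 |1|) :=
    (hdiff.mono (by simpa using closure_ball_subset_closedBall)).diffContOnCl
  simpa using hcl.circleAverage

variable [MeasurableSpace E] [BorelSpace E] {μ : Measure E}

lemma integrable_comp_circleMap_smul [SecondCountableTopology E] [SFinite μ]
    [IsFiniteMeasureOnCompacts μ] (hBc : IsCompact B) (hB : Balanced ℂ B)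
    (hf : ContinuousOn f B) (a b : ℝ) :
    Integrable (Function.uncurry fun (θ : ℝ) w => f (circleMap 0 1 θ • w))
      ((volume.restrict (uIoc a b)).prod (μ.restrict B)) := by
  rw [Measure.prod_restrict]
  refine IntegrableOn.mono_set (t := uIcc a b ×ˢ B) ?_ (prod_mono_left uIoc_subset_uIcc)
  refine ContinuousOn.integrableOn_compact (isCompact_uIcc.prod hBc) ?_
  refine hf.comp (f := fun x : ℝ × E => circleMap 0 1 x.1 • x.2) (by fun_prop) ?_
  exact fun x hx => hB.smul_mem (by simp) hx.2

variable [NormedSpace ℂ F]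

lemma setIntegral_comp_smul_eq_of_balanced (hB : Balanced ℂ B) {c : ℂ} (hc : ‖c‖ = 1)
    (hμ : MeasurePreserving (c • · : E → E) μ μ) : ∫ w in B, f (c • w) ∂μ = ∫ w in B, f w ∂μ := by
  have hemb : MeasurableEmbedding (c • · : E → E) :=
    measurableEmbedding_const_smul₀ (norm_ne_zero_iff.1 (hc ▸ one_ne_zero))
  have hpre : (c • · : E → E) ⁻¹' B = B := by
    ext w
    simpa using hB.smul_mem_iff (a := c) (b := 1) (by simpa using hc) (x := w)
  simpa only [hpre] using hμ.setIntegral_preimage_emb hemb f B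

-- Average `f` over the circles `θ ↦ exp(iθ) w`, and integrate in `w` first.
theorem setIntegral_eq_of_balanced [CompleteSpace F] [SecondCountableTopology E] [SFinite μ]
    [IsFiniteMeasureOnCompacts μ] (hBc : IsCompact B) (hB : Balanced ℂ B)
    (hμ : ∀ c : ℂ, ‖c‖ = 1 → MeasurePreserving (c • · : E → E) μ μ)
    (hf : DifferentiableOn ℂ f B) : ∫ w in B, f w ∂μ = μ.real B • f 0 := by
  have hrot (θ : ℝ) : ∫ w in B, f (circleMap 0 1 θ • w) ∂μ = ∫ w in B, f w ∂μ :=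
    setIntegral_comp_smul_eq_of_balanced hB (by simp) (hμ _ (by simp))
  calc ∫ w in B, f w ∂μ
      = (2 * Real.pi)⁻¹ • ∫ θ in 0..2 * Real.pi, ∫ w in B, f (circleMap 0 1 θ • w) ∂μ := by
        simp only [hrot, intervalIntegral.integral_const, sub_zero, smul_smul]
        rw [inv_mul_cancel₀ Real.two_pi_pos.ne', one_smul]
    _ = ∫ w in B, Real.circleAverage (fun t : ℂ => f (t • w)) 0 1 ∂μ := by
        rw [intervalIntegral_integral_swap
          (integrable_comp_circleMap_smul hBc hB hf.continuousOn _ _), ← integral_smul]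
        rfl
    _ = ∫ _ in B, f 0 ∂μ :=
        setIntegral_congr_fun hBc.measurableSet fun w hw => circleAverage_comp_smul_eq hB hf hw
    _ = μ.real B • f 0 := setIntegral_const _

lemma measurePreserving_smul_pi_complex {ι : Type*} [Fintype ι] {c : ℂ} (hc : ‖c‖ = 1) :
    MeasurePreserving (fun w : ι → ℂ => c • w) :=
  volume_preserving_pi fun _ =>
    (rotation ⟨c, by simp [Submonoid.unitSphere, hc]⟩).measurePreserving

theorem setIntegral_closedBall_eq {ι : Type*} [Fintype ι] [CompleteSpace F] {z : ι → ℂ} {s : ℝ}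
    {f : (ι → ℂ) → F} (hf : DifferentiableOn ℂ f (closedBall z s)) :
    ∫ w in closedBall z s, f w = volume.real (closedBall z s) • f z := by
  have hpre : (z + ·) ⁻¹' closedBall z s = closedBall 0 s := by ext w; simp
  have hf₀ : DifferentiableOn ℂ (fun w => f (z + w)) (closedBall 0 s) := by
    refine hf.comp (Differentiable.differentiableOn (by fun_prop)) fun w hw => ?_
    rwa [← hpre] at hw
  calc ∫ w in closedBall z s, f w = ∫ w in closedBall 0 s, f (z + w) := by
        rw [← hpre, (measurePreserving_add_left volume z).setIntegral_preimage_emb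
          (measurableEmbedding_addLeft z)]
    _ = volume.real (closedBall (0 : ι → ℂ) s) • f (z + 0) :=
        setIntegral_eq_of_balanced (isCompact_closedBall 0 s) balanced_closedBall_zero
          (fun _ hc => measurePreserving_smul_pi_complex hc) hf₀
    _ = volume.real (closedBall z s) • f z := by
        rw [add_zero, ← Measure.addHaar_real_closedBall_center]

end MeanValue

section BergmanSpace

variable {n : ℕ} {Ω : Set (Fin n → ℂ)} {h : (Fin n → ℂ) → ℂ}

lemma volume_closedBall_mul_norm_sq_le (hd : DifferentiableOn ℂ h Ω)
    (hi : IntegrableOn (fun w => ‖h w‖ ^ 2) Ω) {z : Fin n → ℂ} {s : ℝ}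
    (hz : closedBall z s ⊆ Ω) :
    volume.real (closedBall z s) * ‖h z‖ ^ 2 ≤ ∫ w in Ω, ‖h w‖ ^ 2 := calc
  _ = ‖∫ w in closedBall z s, h w ^ 2‖ := by
    rw [setIntegral_closedBall_eq (f := fun w => h w ^ 2) ((hd.mono hz).pow 2), norm_smul,
      norm_pow, Real.norm_of_nonneg measureReal_nonneg]
  _ ≤ ∫ w in closedBall z s, ‖h w‖ ^ 2 := by
    simp only [← norm_pow]; exact norm_integral_le_integral_norm _
  _ ≤ ∫ w in Ω, ‖h w‖ ^ 2 := setIntegral_mono_set hi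
    (Eventually.of_forall fun w => by positivity) hz.eventuallyLE

/-- The closed unit ball of the Bergman space, the space of square-integrable holomorphic
functions on `Ω` with the `L²` norm. Members are functions on `ℂⁿ`, arbitrary outside `Ω`. -/
def bergmanUnitBall (Ω : Set (Fin n → ℂ)) : Set ((Fin n → ℂ) → ℂ) :=
  {h | DifferentiableOn ℂ h Ω ∧ IntegrableOn (fun z => ‖h z‖ ^ 2) Ω ∧ ∫ z in Ω, ‖h z‖ ^ 2 ≤ 1}

lemma inv_smul_mem_bergmanUnitBall (hd : DifferentiableOn ℂ h Ω)
    (hi : IntegrableOn (fun z => ‖h z‖ ^ 2) Ω) {r : ℝ} (hr : √(∫ z in Ω, ‖h z‖ ^ 2) < r) :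
    (r⁻¹ : ℂ) • h ∈ bergmanUnitBall Ω := by
  have hr₀ : 0 < r := (Real.sqrt_nonneg _).trans_lt hr
  have hnorm (z : Fin n → ℂ) : ‖((r⁻¹ : ℂ) • h) z‖ ^ 2 = (r ^ 2)⁻¹ * ‖h z‖ ^ 2 := by
    simp [mul_pow]
  refine ⟨hd.const_smul _, ?_, ?_⟩
  · simp only [hnorm]; exact hi.const_mul _
  · simp only [hnorm, integral_const_mul]
    rw [inv_mul_le_one₀ (by positivity)]
    exact (Real.sqrt_le_left hr₀.le).1 hr.le

lemma isLocallyBoundedHolomorphicOn_bergmanUnitBall (hΩ : IsOpen Ω) :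
    IsLocallyBoundedHolomorphicOn (fun h : bergmanUnitBall Ω => (h : (Fin n → ℂ) → ℂ)) Ω where
  differentiableOn h := h.2.1
  locallyBounded z hz := by
    obtain ⟨r, hr, hrΩ⟩ := Metric.nhds_basis_closedBall.mem_iff.1 (hΩ.mem_nhds hz)
    set v := volume.real (closedBall (0 : Fin n → ℂ) (r / 2)) with hv
    have hv₀ : 0 < v := ENNReal.toReal_pos (measure_closedBall_pos _ _ (half_pos hr)).ne'
      measure_closedBall_lt_top.ne
    refine ⟨√v⁻¹, ?_⟩
    filter_upwards [closedBall_mem_nhds z (half_pos hr)] with w hw h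
    have hwΩ : closedBall w (r / 2) ⊆ Ω :=
      (closedBall_subset_closedBall' (by linarith [mem_closedBall.1 hw])).trans hrΩ
    have hpoint := (volume_closedBall_mul_norm_sq_le h.2.1 h.2.2.1 hwΩ).trans h.2.2.2
    rw [Measure.addHaar_real_closedBall_center, ← hv] at hpoint
    exact Real.le_sqrt_of_sq_le ((le_inv_mul_iff₀ hv₀).2 hpoint |>.trans_eq (mul_one _))

end BergmanSpace

theorem exists_finsupp_forall_norm_sub_mpderiv_sum_le_mul_sqrt {n : ℕ} {Ω : Set (Fin n → ℂ)}
    (hΩ : IsOpen Ω) (hconn : IsPreconnected Ω) {a b : Fin n → ℂ} (ha : a ∈ Ω) (hb : b ∈ Ω)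
    {ε : ℝ} (hε : 0 < ε) :
    ∃ c : (Fin n → ℕ) →₀ ℂ, ∀ h : (Fin n → ℂ) → ℂ, DifferentiableOn ℂ h Ω →
      IntegrableOn (fun z => ‖h z‖ ^ 2) Ω →
        ‖h b - c.sum fun α d => d * mpderiv α h a‖ ≤ ε * √(∫ z in Ω, ‖h z‖ ^ 2) := by
  obtain ⟨c, hc⟩ := (isLocallyBoundedHolomorphicOn_bergmanUnitBall
    hΩ).exists_finsupp_forall_norm_sub_mpderiv_sum_le hΩ hconn ha hb hε
  refine ⟨c, fun h hd hi => (div_le_iff₀' hε).1 (le_of_forall_gt_imp_ge_of_dense fun r hr => ?_)⟩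
  have hr₀ : 0 < r := (Real.sqrt_nonneg _).trans_lt hr
  have hscale : ((r⁻¹ : ℂ) • h) b - (c.sum fun α d => d * mpderiv α ((r⁻¹ : ℂ) • h) a) =
      (r⁻¹ : ℂ) * (h b - c.sum fun α d => d * mpderiv α h a) := by
    simp only [mpderiv_const_smul, Pi.smul_apply, smul_eq_mul, Finsupp.sum, mul_sub,
      Finset.mul_sum, mul_left_comm]
  have hbound := hc ⟨_, inv_smul_mem_bergmanUnitBall hd hi hr⟩
  rw [hscale, norm_mul, norm_inv, Complex.norm_of_nonneg hr₀.le, inv_mul_le_iff₀ hr₀] at hbound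
  rwa [div_le_iff₀ hε]

lemma exists_pos_finsuppSum_eq_sum_filter_piFinset {ι R M : Type*} [Fintype ι] [DecidableEq ι]
    [Zero R] [AddCommMonoid M] (c : (ι → ℕ) →₀ R) :
    ∃ N > 0, ∀ g : (ι → ℕ) → R → M, (∀ α, g α 0 = 0) → c.sum g =
      ∑ α ∈ (Fintype.piFinset fun _ => Finset.range (N + 1)).filter (fun α => ∑ i, α i ≤ N),
        g α (c α) := by
  let d := c.support.sup fun α => ∑ i, α i
  refine ⟨d + 1, d.succ_pos, fun g hg =>
    Finsupp.sum_of_support_subset c (fun α hα => ?_) g fun α _ => hg α⟩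
  have hαd : ∑ i, α i ≤ d := Finset.le_sup (f := fun α : ι → ℕ => ∑ i, α i) hα
  have hαi (i : ι) : α i ≤ ∑ i, α i :=
    Finset.single_le_sum (fun _ _ => Nat.zero_le _) (Finset.mem_univ i)
  simp only [Finset.mem_filter, Fintype.mem_piFinset, Finset.mem_range]
  exact ⟨fun i => by linarith [hαi i], by linarith⟩

theorem approximate_null_quadrature_several_variables_general
    (n : ℕ) (Ω : Set (Fin n → ℂ)) (hΩopen : IsOpen Ω) (hΩconn : IsPreconnected Ω)
    (a b : Fin n → ℂ) (ha : a ∈ Ω) (hb : b ∈ Ω) (ε : ℝ) (hε : 0 < ε) :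
    ∃ N : ℕ, 0 < N ∧ ∃ c : (Fin n → ℕ) → ℂ,
      ∀ h : (Fin n → ℂ) → ℂ, DifferentiableOn ℂ h Ω →
        IntegrableOn (fun z => ‖h z‖ ^ 2) Ω volume →
        ‖h b - ∑ α ∈ (Fintype.piFinset fun _ : Fin n => Finset.range (N + 1)).filter
              (fun α => ∑ i, α i ≤ N),
            c α * mpderiv α h a‖
          ≤ ε * Real.sqrt (∫ z in Ω, ‖h z‖ ^ 2) := by
  obtain ⟨c, hc⟩ := exists_finsupp_forall_norm_sub_mpderiv_sum_le_mul_sqrt hΩopen hΩconn ha hb hε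
  obtain ⟨N, hN, hsum⟩ := exists_pos_finsuppSum_eq_sum_filter_piFinset (M := ℂ) c
  refine ⟨N, hN, c, fun h hd hi => ?_⟩
  rw [← hsum (fun α d => d * mpderiv α h a) fun α => zero_mul _]
  exact hc h hd hi

/-- Approximate null quadrature identity in several complex variables: on a
bounded domain `Ω ⊆ ℂⁿ` with `a, b ∈ Ω`, for every `ε > 0` there are `N` and
complex constants `c_α` (`|α| ≤ N`) such that every square-integrable holomorphic
`h` on `Ω` satisfies `|h(b) − Σ_{|α|≤N} c_α ∂^α h(a)| ≤ ε ‖h‖_{L²(Ω)}`. -/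
theorem approximate_null_quadrature_several_variables
    (n : ℕ) (hn : 0 < n)
    (Ω : Set (Fin n → ℂ)) (hΩopen : IsOpen Ω) (hΩconn : IsConnected Ω)
    (hΩbdd : Bornology.IsBounded Ω)
    (a b : Fin n → ℂ) (ha : a ∈ Ω) (hb : b ∈ Ω)
    (ε : ℝ) (hε : 0 < ε) :
    ∃ N : ℕ, 0 < N ∧ ∃ c : (Fin n → ℕ) → ℂ,
      ∀ h : (Fin n → ℂ) → ℂ, DifferentiableOn ℂ h Ω →
        IntegrableOn (fun z => ‖h z‖ ^ 2) Ω volume →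
        ‖h b - ∑ α ∈ (Fintype.piFinset fun _ : Fin n => Finset.range (N + 1)).filter
              (fun α => ∑ i, α i ≤ N),
            c α * mpderiv α h a‖
          ≤ ε * Real.sqrt (∫ z in Ω, ‖h z‖ ^ 2) :=
  approximate_null_quadrature_several_variables_general n Ω hΩopen hΩconn.isPreconnected a b ha hb
    ε hε
end

section
/- Let Ω be a bounded domain in ℂ, let a ∈ Ω, and let c ∈ ℂ. Suppose Ω is a one-point quadrature domain for holomorphic functions: for every holomorphic function h on Ω that is integrable with respect to Lebesgue area measure, ∫_Ω h dA = c · h(a). Then Ω is a one-point quadrature domain for harmonic functions: for every harmonic function u : Ω → ℝ that is integrable with respect to Lebesgue area measure, ∫_Ω u dA = c · u(a) (in particular c is real, equal to the area of Ω). -/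
open MeasureTheory

/-- Directional (partial) derivative of a real-valued function on `ℂ ≅ ℝ²`
in the direction `v`; `pderivAlong 1` is `∂/∂x` and `pderivAlong I` is `∂/∂y`. -/
noncomputable def pderivAlong (v : ℂ) (u : ℂ → ℝ) : ℂ → ℝ :=
  fun z => fderiv ℝ u z v

/-- `u` is harmonic on `Ω`: twice continuously differentiable (over `ℝ`) on `Ω`
and satisfying `u_xx + u_yy = 0` there. -/
def HarmonicOnSet (u : ℂ → ℝ) (Ω : Set ℂ) : Prop :=
  ContDiffOn ℝ 2 u Ω ∧
    ∀ z ∈ Ω, pderivAlong 1 (pderivAlong 1 u) z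
      + pderivAlong Complex.I (pderivAlong Complex.I u) z = 0

/-!
The domain must be a disc, where the area mean value property holds for harmonic functions as well.
Let `w` be a point of the complement of `Ω` nearest to `a` and `B` the disc about `a` through `w`.
The function `k z = (z - a) / (z - w)` is holomorphic and integrable on `Ω` and vanishes at `a`, so
its integrals over `Ω` and over `B ⊆ Ω` both vanish, by the quadrature identity and by the mean
value property, and hence so does its integral over `Ω \ B`.
But `1 / 2 ≤ Re k` outside `B`, because there `|k - 1| ≤ |k|`; so `Ω \ B` is a null set, and
since `Ω` is open, `Ω = B`.
-/

open Complex Metric Real InnerProductSpace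

section MeanValue

variable {F : Type*} [NormedAddCommGroup F] {f : ℂ → F} {c : ℂ} {R : ℝ}

lemma measurePreserving_circle_mul (ω : Circle) :
    MeasurePreserving (fun z : ℂ => (ω : ℂ) * z) volume volume :=
  (rotation ω).measurePreserving

lemma integrable_prod_circleExp_mul (hf : Integrable f) (μ : Measure ℝ) [IsFiniteMeasure μ] :
    Integrable (fun p : ℝ × ℂ => f (Circle.exp p.1 * p.2)) (μ.prod volume) := by
  have hshear : MeasurePreserving (fun p : ℝ × ℂ => (p.1, (Circle.exp p.1 : ℂ) * p.2))
      (μ.prod volume) (μ.prod volume) :=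
    (MeasurePreserving.id μ).skew_product (by fun_prop)
      (.of_forall fun θ => (measurePreserving_circle_mul (Circle.exp θ)).map_eq)
  exact hshear.integrable_comp_of_integrable (hf.comp_snd μ)

variable [NormedSpace ℝ F]

lemma integral_circle_mul (f : ℂ → F) (ω : Circle) : ∫ z : ℂ, f (ω * z) = ∫ z, f z :=
  (measurePreserving_circle_mul ω).integral_comp
    (rotation ω).toHomeomorph.measurableEmbedding f

lemma circleAverage_zero_norm_eq (f : ℂ → F) (z : ℂ) :
    circleAverage f 0 ‖z‖ = (2 * π)⁻¹ • ∫ θ in 0..2 * π, f (Circle.exp θ * z) := by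
  rw [circleAverage_eq_integral_add z.arg]
  have hpolar (θ : ℝ) : circleMap 0 ‖z‖ (θ + z.arg) = Circle.exp θ * z := by
    conv_rhs => rw [← norm_mul_exp_arg_mul_I z]
    simp only [circleMap_zero, Circle.coe_exp, ofReal_add, add_mul, Complex.exp_add]
    ring
  simp only [hpolar]

variable [CompleteSpace F]

theorem integral_circleAverage_zero_norm (hf : Integrable f) :
    ∫ z : ℂ, circleAverage f 0 ‖z‖ = ∫ z, f z := by
  have h2π : (0 : ℝ) ≤ 2 * π := by positivity
  calc ∫ z : ℂ, circleAverage f 0 ‖z‖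
      = (2 * π)⁻¹ • ∫ z : ℂ, ∫ θ in Set.Ioc 0 (2 * π), f (Circle.exp θ * z) := by
        simp only [circleAverage_zero_norm_eq, integral_smul, intervalIntegral.integral_of_le h2π]
    _ = (2 * π)⁻¹ • ∫ θ in Set.Ioc 0 (2 * π), ∫ z : ℂ, f (Circle.exp θ * z) := by
        rw [integral_integral_swap]
        exact (integrable_prod_circleExp_mul hf _).swap
    _ = ∫ z, f z := by
        simp only [integral_circle_mul, setIntegral_const, volume_real_Ioc_of_le h2π, sub_zero]
        exact inv_smul_smul₀ two_pi_pos.ne' _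

theorem integral_circleAverage_dist (hf : Integrable f) (c : ℂ) :
    ∫ z : ℂ, circleAverage f c (dist z c) = ∫ z, f z := by
  simp_rw [← circleAverage_map_add_const (c := c), dist_eq_norm,
    integral_sub_right_eq_self (fun z => circleAverage (fun w => f (w + c)) 0 ‖z‖) c]
  rw [integral_circleAverage_zero_norm (hf.comp_add_right c), integral_add_right_eq_self]

theorem setIntegral_ball_eq_of_circleAverage_eq (hf : IntegrableOn f (ball c R))
    (hmean : ∀ r ∈ Set.Ico 0 R, circleAverage f c r = f c) :
    ∫ z in ball c R, f z = volume.real (ball c R) • f c := by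
  have havg (z : ℂ) : circleAverage ((ball c R).indicator f) c (dist z c)
      = (ball c R).indicator (fun _ => f c) z := by
    by_cases hz : dist z c < R
    · rw [Set.indicator_of_mem (mem_ball.2 hz), ← hmean _ ⟨dist_nonneg, hz⟩]
      refine circleAverage_congr_sphere fun w hw => Set.indicator_of_mem ?_ f
      rwa [mem_ball, mem_sphere.1 hw, abs_of_nonneg dist_nonneg]
    · rw [Set.indicator_of_notMem (mt mem_ball.1 hz)]
      refine circleAverage_const_on_circle fun w hw => Set.indicator_of_notMem ?_ f
      rwa [mem_ball, mem_sphere.1 hw, abs_of_nonneg dist_nonneg]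
  rw [← integral_indicator measurableSet_ball,
    ← integral_circleAverage_dist (hf.integrable_indicator measurableSet_ball) c]
  simp only [havg]
  rw [integral_indicator measurableSet_ball, setIntegral_const]

theorem setIntegral_ball_eq_of_harmonicOnNhd (hf : HarmonicOnNhd f (ball c R))
    (hfi : IntegrableOn f (ball c R)) :
    ∫ z in ball c R, f z = volume.real (ball c R) • f c := by
  refine setIntegral_ball_eq_of_circleAverage_eq hfi fun r hr => ?_
  refine InnerProductSpace.HarmonicOnNhd.circleAverage_eq (hf.mono ?_)
  rw [abs_of_nonneg hr.1]
  exact closedBall_subset_ball hr.2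

end MeanValue

lemma HarmonicOnSet.harmonicOnNhd {u : ℂ → ℝ} {Ω : Set ℂ} (hu : HarmonicOnSet u Ω)
    (hΩ : IsOpen Ω) : HarmonicOnNhd u Ω := by
  have hC2 (z : ℂ) (hz : z ∈ Ω) : ContDiffAt ℝ 2 u z := hu.1.contDiffAt (hΩ.mem_nhds hz)
  refine fun z hz => ⟨hC2 z hz, ?_⟩
  filter_upwards [hΩ.mem_nhds hz] with w hw
  have hdiff : DifferentiableAt ℝ (fderiv ℝ u) w :=
    ((hC2 w hw).fderiv_right (m := 1) (by norm_num)).differentiableAt (by norm_num)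
  have hsecond (v : ℂ) : pderivAlong v (pderivAlong v u) w = fderiv ℝ (fderiv ℝ u) w v v := by
    unfold pderivAlong
    rw [fderiv_clm_apply hdiff (by fun_prop)]
    simp
  simpa [laplacian_eq_iteratedFDeriv_complexPlane, iteratedFDeriv_two_apply, hsecond]
    using hu.2 w hw

lemma subset_closure_of_measure_sdiff_eq_zero {X : Type*} [TopologicalSpace X]
    [MeasurableSpace X] {μ : Measure X} [μ.IsOpenPosMeasure] {U V : Set X} (hU : IsOpen U)
    (hUV : μ (U \ V) = 0) : U ⊆ closure V := by
  rw [← Set.sdiff_eq_empty, ← (hU.sdiff isClosed_closure).measure_eq_zero_iff μ]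
  exact measure_mono_null (Set.sdiff_subset_sdiff_right subset_closure) hUV

lemma locallyIntegrable_inv : LocallyIntegrable (fun z : ℂ => z⁻¹) :=
  locallyIntegrable_of_norm_le_rpow (C := 1) (α := 1) (by simp) (by simp)
    (.of_forall fun z => by simp [rpow_neg_one]) measurable_inv.aestronglyMeasurable

lemma integrableOn_inv_sub {s : Set ℂ} (hs : volume s ≠ ⊤) (w : ℂ) :
    IntegrableOn (fun z : ℂ => (z - w)⁻¹) s := by
  have hnear : IntegrableOn (fun z : ℂ => (z - w)⁻¹) (closedBall w 1) := by
    have h := (measurePreserving_sub_right volume w).integrableOn_comp_preimage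
      (measurableEmbedding_subRight w) |>.2
      (locallyIntegrable_inv.integrableOn_isCompact (isCompact_closedBall 0 1))
    refine h.mono_set fun z hz => ?_
    simpa [dist_eq_norm] using hz
  have hfar : IntegrableOn (fun z : ℂ => (z - w)⁻¹) (s \ closedBall w 1) := by
    refine .of_bound (measure_ne_top_of_subset Set.sdiff_subset hs).lt_top (by fun_prop) 1
      (ae_restrict_of_ae_restrict_of_subset (fun _ hz => hz.2) ?_)
    refine ae_restrict_of_forall_mem measurableSet_closedBall.compl fun z hz => ?_
    rw [norm_inv, ← dist_eq_norm]
    exact inv_le_one_of_one_le₀ (not_le.1 (mt mem_closedBall.2 hz)).le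
  exact (hnear.union hfar).mono_set (by simp)

lemma integrableOn_sub_div_sub {s : Set ℂ} (hs : volume s ≠ ⊤) (a w : ℂ) :
    IntegrableOn (fun z : ℂ => (z - a) / (z - w)) s := by
  have hsum : IntegrableOn (fun z : ℂ => 1 + (w - a) * (z - w)⁻¹) s :=
    (integrableOn_const hs).add ((integrableOn_inv_sub hs w).const_mul _)
  refine hsum.congr_fun_ae (ae_restrict_of_ae ?_)
  filter_upwards [volume.ae_ne w] with z hz
  field_simp [sub_ne_zero.2 hz]
  ring

lemma one_half_le_re_of_norm_sub_one_le_norm {q : ℂ} (hq : ‖q - 1‖ ≤ ‖q‖) : 1 / 2 ≤ q.re := by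
  have hsq : normSq (q - 1) ≤ normSq q := by
    rw [normSq_eq_norm_sq, normSq_eq_norm_sq]
    gcongr
  simp only [normSq_apply, sub_re, sub_im, one_re, one_im] at hsq
  linarith

lemma one_half_le_re_sub_div_sub {a w z : ℂ} (hzw : z ≠ w) (hz : dist a w ≤ dist z a) :
    1 / 2 ≤ ((z - a) / (z - w)).re := by
  apply one_half_le_re_of_norm_sub_one_le_norm
  rw [div_sub_one (sub_ne_zero.2 hzw), sub_sub_sub_cancel_left, norm_div, norm_div]
  rw [dist_comm, dist_eq_norm, dist_eq_norm] at hz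
  gcongr

/-- `Ω` is a one-point quadrature domain for holomorphic functions, with node `a` and weight `c`.
No condition is put on `Ω`, so that openness, connectedness and size stay separate hypotheses. -/
def HasOnePointQuadrature (Ω : Set ℂ) (a c : ℂ) : Prop :=
  ∀ h : ℂ → ℂ, DifferentiableOn ℂ h Ω → IntegrableOn h Ω volume → ∫ z in Ω, h z = c * h a

namespace HasOnePointQuadrature

variable {Ω : Set ℂ} {a c w : ℂ} {r : ℝ}

lemma weight_eq (hq : HasOnePointQuadrature Ω a c) (hΩ : volume Ω ≠ ⊤) :
    c = volume.real Ω := by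
  simpa [eq_comm] using hq (fun _ => 1) (by fun_prop) (integrableOn_const hΩ)

lemma setIntegral_sdiff_ball_eq_zero (hq : HasOnePointQuadrature Ω a c) (hball : ball a r ⊆ Ω)
    {h : ℂ → ℂ} (hd : DifferentiableOn ℂ h Ω) (hi : IntegrableOn h Ω) (ha : h a = 0) :
    ∫ z in Ω \ ball a r, h z = 0 := by
  have hharm : HarmonicOnNhd h (ball a r) := fun z hz =>
    ((hd.mono hball).analyticAt (isOpen_ball.mem_nhds hz)).harmonicAt
  rw [setIntegral_sdiff measurableSet_ball hi hball, hq h hd hi,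
    setIntegral_ball_eq_of_harmonicOnNhd hharm (hi.mono_set hball), ha, mul_zero, smul_zero,
    sub_zero]

lemma measure_sdiff_ball_eq_zero (hq : HasOnePointQuadrature Ω a c) (hΩ : MeasurableSet Ω)
    (hfin : volume Ω ≠ ⊤) (hw : w ∉ Ω) (hball : ball a (dist a w) ⊆ Ω) :
    volume (Ω \ ball a (dist a w)) = 0 := by
  have hzw {z : ℂ} (hz : z ∈ Ω) : z ≠ w := ne_of_mem_of_not_mem hz hw
  have hdiff : DifferentiableOn ℂ (fun z => (z - a) / (z - w)) Ω :=
    .div (by fun_prop) (by fun_prop) fun z hz => sub_ne_zero.2 (hzw hz)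
  have hint := integrableOn_sub_div_sub hfin a w
  have hfin' : volume (Ω \ ball a (dist a w)) ≠ ⊤ :=
    measure_ne_top_of_subset Set.sdiff_subset hfin
  have hint' := hint.mono_set (Set.sdiff_subset (t := ball a (dist a w)))
  have hzero : ∫ z in Ω \ ball a (dist a w), ((z - a) / (z - w)).re = 0 := by
    simpa [hq.setIntegral_sdiff_ball_eq_zero hball hdiff hint] using reCLM.integral_comp_comm hint'
  have hle := setIntegral_ge_of_const_le_real (hΩ.diff measurableSet_ball) hfin'
    (fun z hz => one_half_le_re_sub_div_sub (hzw hz.1) (not_lt.1 hz.2)) hint'.re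
  have hnonpos : volume.real (Ω \ ball a (dist a w)) ≤ 0 := by
    simp only [hzero] at hle
    linarith
  exact (measureReal_eq_zero_iff hfin').1 (hnonpos.antisymm measureReal_nonneg)

theorem exists_eq_ball (hq : HasOnePointQuadrature Ω a c) (hΩ : IsOpen Ω)
    (hfin : volume Ω ≠ ⊤) (ha : a ∈ Ω) : ∃ r > 0, Ω = ball a r := by
  have hne : (Ωᶜ).Nonempty := by
    rw [Set.nonempty_compl]
    rintro rfl
    simp at hfin
  obtain ⟨w, hw, hdist⟩ := hΩ.isClosed_compl.exists_infDist_eq_dist hne a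
  have hpos : 0 < dist a w := dist_pos.2 (ne_of_mem_of_not_mem ha hw)
  have hball : ball a (dist a w) ⊆ Ω := hdist ▸ ball_infDist_compl_subset
  have hsub : Ω ⊆ closedBall a (dist a w) := closure_ball a hpos.ne' ▸
    subset_closure_of_measure_sdiff_eq_zero hΩ
      (hq.measure_sdiff_ball_eq_zero hΩ.measurableSet hfin hw hball)
  refine ⟨dist a w, hpos, Set.Subset.antisymm ?_ hball⟩
  rw [← interior_closedBall a hpos.ne']
  exact interior_maximal hsub hΩ

end HasOnePointQuadrature

theorem one_point_quadrature_holomorphic_to_harmonic_general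
    {F : Type*} [NormedAddCommGroup F] [NormedSpace ℝ F] [CompleteSpace F]
    {Ω : Set ℂ} (hΩopen : IsOpen Ω) (hΩfin : volume Ω ≠ ⊤) {a : ℂ} (ha : a ∈ Ω) {c : ℂ}
    (hquad : HasOnePointQuadrature Ω a c) :
    (∀ u : ℂ → F, HarmonicOnNhd u Ω → IntegrableOn u Ω volume →
      ∫ z in Ω, u z = volume.real Ω • u a)
    ∧ c = volume.real Ω := by
  refine ⟨fun u hu hui => ?_, hquad.weight_eq hΩfin⟩
  obtain ⟨r, -, rfl⟩ := hquad.exists_eq_ball hΩopen hΩfin ha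
  exact setIntegral_ball_eq_of_harmonicOnNhd hu hui

/-- A one-point quadrature domain for holomorphic functions is a one-point
quadrature domain for harmonic functions: if `∫_Ω h dA = c·h(a)` for every
integrable holomorphic `h` on the bounded domain `Ω`, then `∫_Ω u dA = c·u(a)` for
every integrable harmonic `u` on `Ω` (and `c` is real, equal to the area of `Ω`). -/
theorem one_point_quadrature_holomorphic_to_harmonic
    (Ω : Set ℂ) (hΩopen : IsOpen Ω) (hΩconn : IsConnected Ω)
    (hΩbdd : Bornology.IsBounded Ω)
    (a : ℂ) (ha : a ∈ Ω) (c : ℂ)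
    (hquad : ∀ h : ℂ → ℂ, DifferentiableOn ℂ h Ω → IntegrableOn h Ω volume →
      ∫ z in Ω, h z = c * h a) :
    (∀ u : ℂ → ℝ, HarmonicOnSet u Ω → IntegrableOn u Ω volume →
      ((∫ z in Ω, u z : ℝ) : ℂ) = c * (u a : ℂ))
    ∧ c = (((volume Ω).toReal : ℝ) : ℂ) := by
  obtain ⟨hmean, hc⟩ := one_point_quadrature_holomorphic_to_harmonic_general (F := ℝ) hΩopen
    hΩbdd.measure_lt_top.ne ha hquad
  exact ⟨fun u hu hi => by simp [hmean u (hu.harmonicOnNhd hΩopen) hi, hc], hc⟩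
end
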